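/- arXiv:2108.11937 — 4 statements merged into one kernel-verified Lean document; each statement's English description precedes it below -/
import Mathlib

section
/- Let α be a complex number with Re α > 0 and ζ(α) = 0, where ζ is the Riemann zeta function. Then the partial sums satisfy ∑_{n ≤ x} (−1)^{n−1}/n^α = O(x^{−Re α}), i.e., there is a constant C such that |∑_{n ≤ x} (−1)^{n−1}/n^α| ≤ C x^{−Re α} for all x ≥ 1. -/
open Filter Finset

/-- `f` is a multiplicative arithmetical function: `f 1 = 1` and
`f (m*n) = f m * f n` whenever `gcd m n = 1`. -/
def IsMultFn (f : ℕ → ℂ) : Prop :=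
  f 1 = 1 ∧ ∀ m n : ℕ, Nat.Coprime m n → f (m * n) = f m * f n

/-- The series `∑_{k=0}^∞ g k` converges (in the sense of partial sums) to `L`. -/
def SeriesTendsTo (g : ℕ → ℂ) (L : ℂ) : Prop :=
  Filter.Tendsto (fun N => ∑ k ∈ Finset.range N, g k) Filter.atTop (nhds L)

/-- `f` is an MO function: multiplicative, `∑_{n=1}^∞ f n = 0`, and for each prime `p`
the series `∑_{k=0}^∞ f (p^k)` converges to a nonzero value. -/
def IsMO (f : ℕ → ℂ) : Prop :=
  IsMultFn f ∧ SeriesTendsTo (fun n => f (n + 1)) 0 ∧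
    ∀ p : ℕ, p.Prime → ∃ L : ℂ, L ≠ 0 ∧ SeriesTendsTo (fun k => f (p ^ k)) L

/-!
Let `η(s) = ∑ (-1) ^ (n - 1) / n ^ s`. Pairing each term with its successor replaces this
alternating series of `a k = (k + 1) ^ (-s)` by half the series of `(-1) ^ k (a k - a (k + 1))`, up
to boundary terms. Since `‖a k - a (k + 1)‖` is dominated by the consecutive differences of a
multiple of `(k + 1) ^ (-Re s)`, the new series converges absolutely for `Re s > 0`, with a
telescoping bound `O(N ^ (-Re s))` on its tail, and locally uniformly in `s`, so that `η` is
holomorphic there. For `Re s > 1` it equals `(1 - 2 ^ (1 - s)) ζ(s)`, hence also for all `s ≠ 1`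
with `Re s > 0` by the identity theorem. At a zero of `ζ` the partial sums of `η` are therefore
nothing but the error term.
-/

section Telescoping

variable {b : ℕ → ℝ}

lemma sum_range_sub_succ_le (hb : ∀ k, 0 ≤ b k) (n : ℕ) :
    ∑ k ∈ range n, (b k - b (k + 1)) ≤ b 0 := by
  rw [sum_range_sub']
  exact sub_le_self _ (hb n)

lemma summable_sub_succ (hb : ∀ k, 0 ≤ b k) (hanti : Antitone b) :
    Summable fun k ↦ b k - b (k + 1) :=
  summable_of_sum_range_le (fun k ↦ sub_nonneg.2 (hanti k.le_succ)) (sum_range_sub_succ_le hb)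

lemma tsum_sub_succ_le (hb : ∀ k, 0 ≤ b k) (hanti : Antitone b) :
    ∑' k, (b k - b (k + 1)) ≤ b 0 :=
  Real.tsum_le_of_sum_range_le (fun k ↦ sub_nonneg.2 (hanti k.le_succ)) (sum_range_sub_succ_le hb)

lemma antitone_of_norm_sub_succ_le {E : Type*} [SeminormedAddCommGroup E] {a : ℕ → E}
    (hab : ∀ k, ‖a k - a (k + 1)‖ ≤ b k - b (k + 1)) : Antitone b :=
  antitone_nat_of_succ_le fun k ↦ sub_nonneg.1 ((norm_nonneg _).trans (hab k))

end Telescoping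

section EulerTransform

lemma two_smul_alternating_sum_range {R M : Type*} [CommRing R] [AddCommGroup M] [Module R M]
    (a : ℕ → M) (n : ℕ) :
    (2 : R) • ∑ k ∈ range (n + 1), (-1 : R) ^ k • a k =
      a 0 + ∑ k ∈ range n, (-1 : R) ^ k • (a k - a (k + 1)) + (-1 : R) ^ n • a n := by
  induction n with
  | zero => simp [two_smul]
  | succ n ih =>
    rw [sum_range_succ, smul_add, ih, sum_range_succ, pow_succ]
    module

variable {E : Type*} [NormedAddCommGroup E] [NormedSpace ℝ E] {a : ℕ → E} {b : ℕ → ℝ}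

/-- The value assigned to the alternating series `∑ (-1) ^ k a k` by one step of Euler's
transformation, the average of the series with its shift. It sums `(-1) ^ k a k` also when `a` is
merely a null sequence of bounded variation, in which case the series on the right-hand side
converges absolutely. -/
noncomputable def alternatingEulerSum (a : ℕ → E) : E :=
  (2⁻¹ : ℝ) • (a 0 + ∑' k, (-1 : ℝ) ^ k • (a k - a (k + 1)))

lemma norm_neg_one_pow_smul (k : ℕ) (v : E) : ‖(-1 : ℝ) ^ k • v‖ = ‖v‖ := by
  simp [norm_smul]

lemma alternatingEulerSum_eq_of_hasSum {S : E} (hS : HasSum (fun k ↦ (-1 : ℝ) ^ k • a k) S) :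
    alternatingEulerSum a = S := by
  have hshift : HasSum (fun k ↦ (-1 : ℝ) ^ (k + 1) • a (k + 1)) (S - a 0) := by
    simpa using (hasSum_nat_add_iff' 1).2 hS
  have hdiff : HasSum (fun k ↦ (-1 : ℝ) ^ k • (a k - a (k + 1))) (S + (S - a 0)) :=
    (hS.add hshift).congr_fun fun k ↦ by rw [pow_succ]; module
  rw [alternatingEulerSum, hdiff.tsum_eq]
  module

lemma hasSum_alternating_of_hasSum_odd {S T : E} (hS : HasSum a S)
    (hT : HasSum (fun k ↦ a (2 * k + 1)) T) :
    HasSum (fun k ↦ (-1 : ℝ) ^ k • a k) (S - (2 : ℝ) • T) := by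
  have hodd : HasSum (fun k ↦ if Even k then 0 else a k) T := by
    rw [← zero_add T]
    exact HasSum.even_add_odd (by simp [hasSum_zero]) (by simpa using hT)
  refine (hS.sub (hodd.const_smul (2 : ℝ))).congr_fun fun k ↦ ?_
  rcases Nat.even_or_odd k with hk | hk
  · simp [hk, hk.neg_one_pow]
  · simp only [hk.neg_one_pow, Nat.not_even_iff_odd.2 hk, if_false]
    module

lemma summable_alternating_sub_succ [CompleteSpace E] (hb : ∀ k, 0 ≤ b k)
    (hab : ∀ k, ‖a k - a (k + 1)‖ ≤ b k - b (k + 1)) :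
    Summable fun k ↦ (-1 : ℝ) ^ k • (a k - a (k + 1)) :=
  (summable_sub_succ hb (antitone_of_norm_sub_succ_le hab)).of_norm_bounded
    fun k ↦ (norm_neg_one_pow_smul k _).trans_le (hab k)

lemma norm_tsum_alternating_sub_succ_nat_add_le (hb : ∀ k, 0 ≤ b k)
    (hab : ∀ k, ‖a k - a (k + 1)‖ ≤ b k - b (k + 1)) (n : ℕ) :
    ‖∑' k, (-1 : ℝ) ^ (k + n) • (a (k + n) - a (k + n + 1))‖ ≤ b n := by
  have hanti : Antitone fun k ↦ b (k + n) :=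
    (antitone_of_norm_sub_succ_le hab).comp_monotone fun _ _ h ↦ Nat.add_le_add_right h n
  have hpos (k : ℕ) : 0 ≤ b (k + n) := hb (k + n)
  calc ‖∑' k, (-1 : ℝ) ^ (k + n) • (a (k + n) - a (k + n + 1))‖
      ≤ ∑' k, (b (k + n) - b (k + 1 + n)) :=
        tsum_of_norm_bounded (summable_sub_succ hpos hanti).hasSum fun k ↦ by
          rw [norm_neg_one_pow_smul, add_right_comm k 1 n]
          exact hab (k + n)
    _ ≤ b n := by simpa using tsum_sub_succ_le hpos hanti

theorem norm_alternating_sum_range_sub_alternatingEulerSum_le [CompleteSpace E]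
    (hb : ∀ k, 0 ≤ b k) (hab : ∀ k, ‖a k - a (k + 1)‖ ≤ b k - b (k + 1)) (n : ℕ) :
    ‖∑ k ∈ range (n + 1), (-1 : ℝ) ^ k • a k - alternatingEulerSum a‖ ≤ (b n + ‖a n‖) / 2 := by
  set tail := ∑' k, (-1 : ℝ) ^ (k + n) • (a (k + n) - a (k + n + 1))
  have herror : ∑ k ∈ range (n + 1), (-1 : ℝ) ^ k • a k - alternatingEulerSum a =
      (2⁻¹ : ℝ) • ((-1 : ℝ) ^ n • a n - tail) := by
    rw [alternatingEulerSum, ← (summable_alternating_sub_succ hb hab).sum_add_tsum_nat_add n,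
      eq_inv_smul_iff₀ two_ne_zero, smul_sub, two_smul_alternating_sum_range]
    module
  calc ‖∑ k ∈ range (n + 1), (-1 : ℝ) ^ k • a k - alternatingEulerSum a‖
      = 2⁻¹ * ‖(-1 : ℝ) ^ n • a n - tail‖ := by rw [herror, norm_smul]; norm_num
    _ ≤ 2⁻¹ * (‖a n‖ + b n) := by
      gcongr
      exact (norm_sub_le _ _).trans (add_le_add (norm_neg_one_pow_smul n _).le
        (norm_tsum_alternating_sub_succ_nat_add_le hb hab n))
    _ = (b n + ‖a n‖) / 2 := by ring

lemma differentiableOn_alternatingEulerSum {F : Type*} [NormedAddCommGroup F] [NormedSpace ℂ F]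
    [CompleteSpace F] {f : ℕ → ℂ → F} {U : Set ℂ} (hU : IsOpen U)
    (hf : ∀ k, DifferentiableOn ℂ (f k) U) (hb : ∀ k, 0 ≤ b k)
    (hfb : ∀ k, ∀ z ∈ U, ‖f k z - f (k + 1) z‖ ≤ b k - b (k + 1)) :
    DifferentiableOn ℂ (fun z ↦ alternatingEulerSum fun k ↦ f k z) U := by
  obtain rfl | ⟨w, hw⟩ := U.eq_empty_or_nonempty
  · exact differentiableOn_empty
  have hanti : Antitone b := antitone_of_norm_sub_succ_le fun k ↦ hfb k w hw
  have htsum : DifferentiableOn ℂ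
      (fun z ↦ ∑' k, (-1 : ℝ) ^ k • (f k z - f (k + 1) z)) U :=
    Complex.differentiableOn_tsum_of_summable_norm (summable_sub_succ hb hanti)
      (fun k ↦ ((hf k).sub (hf (k + 1))).const_smul _) hU
      fun k z hz ↦ (norm_neg_one_pow_smul k _).trans_le (hfb k z hz)
  exact ((hf 0).add htsum).const_smul _

end EulerTransform

section Powers

lemma cpow_neg_sub_cpow_neg_eq_mul_integral (s : ℂ) {x y : ℝ} (hx : 0 < x) (hy : 0 < y) :
    (x : ℂ) ^ (-s) - (y : ℂ) ^ (-s) = s * ∫ t in x..y, (t : ℂ) ^ (-s - 1) := by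
  obtain rfl | hs := eq_or_ne s 0
  · simp
  have hzero : (0 : ℝ) ∉ Set.uIcc x y := Set.notMem_uIcc_of_lt hx hy
  rw [integral_cpow (Or.inr ⟨by simpa [sub_eq_neg_self] using hs, hzero⟩), sub_add_cancel]
  field_simp
  ring

lemma norm_cpow_neg_sub_cpow_neg_le {s : ℂ} {c C x y : ℝ} (hc : 0 < c) (hcs : c ≤ s.re)
    (hC : ‖s‖ ≤ C) (hx : 1 ≤ x) (hxy : x ≤ y) :
    ‖(x : ℂ) ^ (-s) - (y : ℂ) ^ (-s)‖ ≤ C / c * x ^ (-c) - C / c * y ^ (-c) := by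
  have hx0 : 0 < x := zero_lt_one.trans_le hx
  have hy0 : 0 < y := hx0.trans_le hxy
  have hzero : (0 : ℝ) ∉ Set.uIcc x y := Set.notMem_uIcc_of_lt hx0 hy0
  have hle (t : ℝ) (ht : t ∈ Set.Ioc x y) : ‖(t : ℂ) ^ (-s - 1)‖ ≤ t ^ (-c - 1) := by
    rw [Complex.norm_cpow_eq_rpow_re_of_pos (hx0.trans ht.1)]
    exact Real.rpow_le_rpow_of_exponent_le (hx.trans ht.1.le) (by simpa using hcs)
  calc ‖(x : ℂ) ^ (-s) - (y : ℂ) ^ (-s)‖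
      = ‖s‖ * ‖∫ t in x..y, (t : ℂ) ^ (-s - 1)‖ := by
        rw [cpow_neg_sub_cpow_neg_eq_mul_integral s hx0 hy0, norm_mul]
    _ ≤ C * ∫ t in x..y, t ^ (-c - 1) := by
        gcongr
        · exact (norm_nonneg s).trans hC
        · exact intervalIntegral.norm_integral_le_of_norm_le hxy (.of_forall hle)
            (intervalIntegral.intervalIntegrable_rpow (Or.inr hzero))
    _ = C / c * x ^ (-c) - C / c * y ^ (-c) := by
        rw [integral_rpow (Or.inr ⟨by linarith, hzero⟩), sub_add_cancel]
        field_simp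
        ring

lemma natFloor_rpow_neg_le {c x : ℝ} (hc : 0 ≤ c) (hx : 1 ≤ x) :
    (⌊x⌋₊ : ℝ) ^ (-c) ≤ 2 ^ c * x ^ (-c) := by
  calc (⌊x⌋₊ : ℝ) ^ (-c) ≤ (x / 2) ^ (-c) :=
        Real.rpow_le_rpow_of_nonpos (by positivity) (Nat.div_two_lt_floor hx).le (by linarith)
    _ = 2 ^ c * x ^ (-c) := by
        rw [Real.div_rpow (by positivity) zero_le_two, Real.rpow_neg zero_le_two, div_inv_eq_mul,
          mul_comm]

end Powers

section DirichletEta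

/-- The Dirichlet eta function `η(s) = ∑ (-1) ^ (n - 1) / n ^ s` on the half-plane `0 < s.re`,
where its defining series need not converge absolutely but its Euler transform does. -/
noncomputable def dirichletEta (s : ℂ) : ℂ :=
  alternatingEulerSum fun k : ℕ ↦ ((k + 1 : ℕ) : ℂ) ^ (-s)

lemma norm_natCast_cpow_neg_sub_succ_le {s : ℂ} {c C : ℝ} (hc : 0 < c) (hcs : c ≤ s.re)
    (hC : ‖s‖ ≤ C) (k : ℕ) :
    ‖((k + 1 : ℕ) : ℂ) ^ (-s) - ((k + 1 + 1 : ℕ) : ℂ) ^ (-s)‖ ≤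
      C / c * ((k + 1 : ℕ) : ℝ) ^ (-c) - C / c * ((k + 1 + 1 : ℕ) : ℝ) ^ (-c) := by
  exact_mod_cast norm_cpow_neg_sub_cpow_neg_le (x := (k + 1 : ℕ)) (y := (k + 1 + 1 : ℕ)) hc hcs hC
    (by simp) (by simp)

lemma norm_alternating_sum_range_sub_dirichletEta_le {s : ℂ} (hs : 0 < s.re) (n : ℕ) :
    ‖∑ k ∈ range (n + 1), (-1 : ℝ) ^ k • ((k + 1 : ℕ) : ℂ) ^ (-s) - dirichletEta s‖ ≤
      (‖s‖ / s.re + 1) / 2 * ((n + 1 : ℕ) : ℝ) ^ (-s.re) := by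
  refine (norm_alternating_sum_range_sub_alternatingEulerSum_le (fun k ↦ by positivity)
    (norm_natCast_cpow_neg_sub_succ_le hs le_rfl le_rfl) n).trans_eq ?_
  rw [Complex.norm_natCast_cpow_of_pos n.succ_pos, Complex.neg_re]
  ring

lemma differentiableOn_dirichletEta : DifferentiableOn ℂ dirichletEta {s | 0 < s.re} := by
  intro s (hs : 0 < s.re)
  let U : Set ℂ := {z | s.re / 2 < z.re} ∩ Metric.ball 0 (‖s‖ + 1)
  have hU : IsOpen U := (isOpen_lt continuous_const Complex.continuous_re).inter Metric.isOpen_ball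
  have hsU : s ∈ U := ⟨half_lt_self hs, by simp⟩
  have hpow (k : ℕ) : DifferentiableOn ℂ (fun z : ℂ ↦ ((k + 1 : ℕ) : ℂ) ^ (-z)) U :=
    (differentiable_id.neg.const_cpow
      (Or.inl (Nat.cast_ne_zero.2 k.succ_ne_zero))).differentiableOn
  have hη : DifferentiableOn ℂ dirichletEta U :=
    differentiableOn_alternatingEulerSum hU hpow (fun k ↦ by positivity) fun k z hz ↦
      norm_natCast_cpow_neg_sub_succ_le (half_pos hs) hz.1.le (mem_ball_zero_iff.1 hz.2).le k
  exact (hη.differentiableAt (hU.mem_nhds hsU)).differentiableWithinAt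

lemma hasSum_natCast_succ_cpow_neg {s : ℂ} (hs : 1 < s.re) :
    HasSum (fun k : ℕ ↦ ((k + 1 : ℕ) : ℂ) ^ (-s)) (riemannZeta s) := by
  have hsummable : Summable fun k : ℕ ↦ 1 / ((k : ℂ) + 1) ^ s := by
    simpa using (summable_nat_add_iff 1).2 (Complex.summable_one_div_nat_cpow.2 hs)
  rw [zeta_eq_tsum_one_div_nat_add_one_cpow hs]
  exact hsummable.hasSum.congr_fun fun k ↦ by simp [Complex.cpow_neg]

lemma dirichletEta_eq_of_one_lt_re {s : ℂ} (hs : 1 < s.re) :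
    dirichletEta s = (1 - 2 ^ (1 - s)) * riemannZeta s := by
  have hζ := hasSum_natCast_succ_cpow_neg hs
  have hodd : HasSum (fun k : ℕ ↦ ((2 * k + 1 + 1 : ℕ) : ℂ) ^ (-s)) (2 ^ (-s) * riemannZeta s) :=
    (hζ.mul_left _).congr_fun fun k ↦ by
      rw [show 2 * k + 1 + 1 = 2 * (k + 1) by ring, Nat.cast_mul,
        Complex.natCast_mul_natCast_cpow, Nat.cast_ofNat]
  rw [dirichletEta, alternatingEulerSum_eq_of_hasSum (hasSum_alternating_of_hasSum_odd hζ hodd),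
    sub_eq_add_neg 1 s, Complex.cpow_add _ _ two_ne_zero, Complex.cpow_one, Complex.real_smul]
  push_cast
  ring

theorem dirichletEta_eq {s : ℂ} (hs : 0 < s.re) (hs1 : s ≠ 1) :
    dirichletEta s = (1 - 2 ^ (1 - s)) * riemannZeta s := by
  -- Multiplying by `z - 1` removes the pole of `ζ`.
  have heqOn : Set.EqOn (fun z ↦ (z - 1) * dirichletEta z)
      (fun z ↦ (1 - 2 ^ (1 - z)) * riemannZeta₁ z) {z | 0 < z.re} := by
    have hopen : IsOpen {z : ℂ | 0 < z.re} := isOpen_lt continuous_const Complex.continuous_re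
    have hleft : DifferentiableOn ℂ (fun z ↦ (z - 1) * dirichletEta z) {z | 0 < z.re} :=
      (differentiableOn_id.sub_const 1).mul differentiableOn_dirichletEta
    have hright : Differentiable ℂ fun z : ℂ ↦ (1 - 2 ^ (1 - z)) * riemannZeta₁ z :=
      (((differentiable_id.const_sub 1).const_cpow (Or.inl two_ne_zero)).const_sub 1).mul
        differentiable_riemannZeta₁
    refine (hleft.analyticOnNhd hopen).eqOn_of_preconnected_of_eventuallyEq
      (hright.differentiableOn.analyticOnNhd hopen) (convex_halfSpace_re_gt 0).isPreconnected
      (z₀ := 2) (by simp) ?_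
    filter_upwards [(isOpen_lt continuous_const Complex.continuous_re).mem_nhds
      (show 1 < (2 : ℂ).re by simp)] with z (hz : 1 < z.re)
    have hz1 : z ≠ 1 := by rintro rfl; simp at hz
    rw [dirichletEta_eq_of_one_lt_re hz, riemannZeta_eq_inv_sub_mul hz1]
    field_simp [sub_ne_zero.2 hz1]
  refine mul_left_cancel₀ (sub_ne_zero.2 hs1) ((heqOn hs).trans ?_)
  rw [riemannZeta_eq_inv_sub_mul hs1]
  field_simp [sub_ne_zero.2 hs1]

end DirichletEta

lemma sum_Icc_alternating_div_cpow (s : ℂ) (n : ℕ) :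
    ∑ m ∈ Icc 1 n, (-1 : ℂ) ^ (m - 1) / (m : ℂ) ^ s =
      ∑ k ∈ range n, (-1 : ℝ) ^ k • ((k + 1 : ℕ) : ℂ) ^ (-s) := by
  rw [← Ico_add_one_right_eq_Icc, sum_Ico_eq_sum_range, Nat.add_sub_cancel]
  refine sum_congr rfl fun k _ ↦ ?_
  simp [Complex.cpow_neg, div_eq_mul_inv, add_comm]

theorem stmt13_general (α : ℂ) (hα : 0 < α.re) (hα1 : α ≠ 1) :
    ∃ C : ℝ, ∀ x : ℝ, 1 ≤ x →
      ‖∑ n ∈ Finset.Icc 1 ⌊x⌋₊, (-1 : ℂ) ^ (n - 1) / (n : ℂ) ^ α -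
        (1 - 2 ^ (1 - α)) * riemannZeta α‖ ≤ C * x ^ (-α.re) := by
  refine ⟨(‖α‖ / α.re + 1) / 2 * 2 ^ α.re, fun x hx ↦ ?_⟩
  obtain ⟨N, hN⟩ : ∃ N, ⌊x⌋₊ = N + 1 := Nat.exists_eq_add_one.2 (Nat.floor_pos.2 hx)
  rw [sum_Icc_alternating_div_cpow, ← dirichletEta_eq hα hα1, mul_assoc]
  calc ‖∑ k ∈ range ⌊x⌋₊, (-1 : ℝ) ^ k • ((k + 1 : ℕ) : ℂ) ^ (-α) - dirichletEta α‖
      ≤ (‖α‖ / α.re + 1) / 2 * (⌊x⌋₊ : ℝ) ^ (-α.re) := by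
        rw [hN]
        exact norm_alternating_sum_range_sub_dirichletEta_le hα N
    _ ≤ (‖α‖ / α.re + 1) / 2 * (2 ^ α.re * x ^ (-α.re)) := by
        gcongr
        exact natFloor_rpow_neg_le hα.le hx

theorem stmt13 (α : ℂ) (hα : 0 < α.re) (hζ : riemannZeta α = 0) :
    ∃ C : ℝ, ∀ x : ℝ, 1 ≤ x →
      ‖∑ n ∈ Finset.Icc 1 ⌊x⌋₊, (-1 : ℂ) ^ (n - 1) / (n : ℂ) ^ α‖ ≤ C * x ^ (-α.re) := by
  have hα1 : α ≠ 1 := by rintro rfl; exact riemannZeta_one_ne_zero hζ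
  simpa [hζ] using stmt13_general α hα hα1
end

section
/- Let α be a complex number with Re α > 0 and ζ(α) = 0, where ζ is the Riemann zeta function. Then ∑_{n ≤ x} (−1)^{n−1}/n^α = Ω(x^{−Re α}); that is, there exists a constant c > 0 and arbitrarily large x with |∑_{n ≤ x} (−1)^{n−1}/n^α| ≥ c x^{−Re α}. -/
open Filter Finset

/-!
Each term of the series is the difference of two consecutive partial sums. If the partial sums up to
`x` were `o(x ^ (-Re α))`, then, since `n ^ (-Re α)` and `(n + 1) ^ (-Re α)` have the same order of
magnitude, so would be the terms `(-1) ^ (n - 1) / n ^ α`; but these have modulus exactly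
`n ^ (-Re α)`.
-/

open Asymptotics Topology

theorem isLittleO_of_isLittleO_sum_Icc {E F : Type*} [SeminormedAddCommGroup E]
    [SeminormedAddCommGroup F] {f : ℕ → E} {g : ℕ → F}
    (hsum : (fun n => ∑ k ∈ Icc 1 n, f k) =o[atTop] g)
    (hg : g =O[atTop] fun n => g (n + 1)) : f =o[atTop] g := by
  have hsucc : (fun n => ∑ k ∈ Icc 1 (n + 1), f k) =o[atTop] fun n => g (n + 1) :=
    hsum.comp_tendsto (tendsto_add_atTop_nat 1)
  have hterm : (fun n => f (n + 1)) =o[atTop] fun n => g (n + 1) :=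
    (hsucc.sub (hsum.trans_isBigO hg)).congr_left fun n => by
      rw [sum_Icc_succ_top (Nat.le_add_left 1 n), add_sub_cancel_left]
  rw [← map_add_atTop_eq_nat 1]
  exact isLittleO_map.mpr hterm

theorem exists_mul_norm_le_norm_floor_of_not_isLittleO {E F : Type*} [Norm E] [Norm F]
    {S : ℕ → E} {g : ℝ → F} (h : ¬ S =o[atTop] fun n : ℕ => g n) :
    ∃ c : ℝ, 0 < c ∧ ∀ x₀ : ℝ, ∃ x : ℝ, x₀ ≤ x ∧ c * ‖g x‖ ≤ ‖S ⌊x⌋₊‖ := by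
  simp only [isLittleO_iff, not_forall, not_eventually, not_le] at h
  obtain ⟨c, hc, hfreq⟩ := h
  refine ⟨c, hc, fun x₀ => ?_⟩
  obtain ⟨n, hn, hlt⟩ := frequently_atTop.mp hfreq ⌈x₀⌉₊
  exact ⟨n, Nat.ceil_le.mp hn, by simpa only [Nat.floor_natCast] using hlt.le⟩

theorem isTheta_natCast_rpow_succ (s : ℝ) :
    (fun n : ℕ => (n : ℝ) ^ s) =Θ[atTop] fun n : ℕ => ((n + 1 : ℕ) : ℝ) ^ s := by
  have hequiv : (fun n : ℕ => (n : ℝ)) ~[atTop] fun n : ℕ => ((n + 1 : ℕ) : ℝ) :=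
    isEquivalent_of_tendsto_one <| by
      simpa [Pi.div_def] using tendsto_natCast_div_add_atTop (1 : ℝ)
  exact hequiv.isTheta.rpow (.of_forall fun n => n.cast_nonneg)
    (.of_forall fun n => (n + 1).cast_nonneg)

theorem not_isLittleO_sum_div_natCast_cpow {a : ℕ → ℂ} (ha : ¬ Tendsto a atTop (𝓝 0)) (α : ℂ) :
    ¬ (fun n => ∑ k ∈ Icc 1 n, a k / (k : ℂ) ^ α) =o[atTop] fun n : ℕ => (n : ℝ) ^ (-α.re) := by
  intro hsum
  have hterm : (fun n : ℕ => a n / (n : ℂ) ^ α) =o[atTop] fun n : ℕ => (n : ℝ) ^ (-α.re) :=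
    isLittleO_of_isLittleO_sum_Icc hsum (isTheta_natCast_rpow_succ (-α.re)).isBigO
  have hpow : (fun n : ℕ => (n : ℂ) ^ α) =O[atTop] fun n : ℕ => (n : ℝ) ^ α.re :=
    .of_norm_eventuallyLE <| (eventually_gt_atTop 0).mono fun n hn =>
      (Complex.norm_natCast_cpow_of_pos hn α).le
  refine ha ((isLittleO_one_iff ℝ).mp ((hterm.mul_isBigO hpow).congr' ?_ ?_))
  · filter_upwards [eventually_ne_atTop 0] with n hn
    exact div_mul_cancel₀ _ (Complex.cpow_ne_zero_iff.mpr (.inl (Nat.cast_ne_zero.mpr hn)))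
  · filter_upwards [eventually_gt_atTop 0] with n hn
    rw [← Real.rpow_add (Nat.cast_pos.mpr hn), neg_add_cancel, Real.rpow_zero]

theorem not_tendsto_neg_one_pow_pred_zero :
    ¬ Tendsto (fun n : ℕ => (-1 : ℂ) ^ (n - 1)) atTop (𝓝 0) := fun h => by
  simpa using h.norm

theorem stmt14_general (α : ℂ) :
    ∃ c : ℝ, 0 < c ∧ ∀ x₀ : ℝ, ∃ x : ℝ, x₀ ≤ x ∧
      c * x ^ (-α.re) ≤ ‖∑ n ∈ Finset.Icc 1 ⌊x⌋₊, (-1 : ℂ) ^ (n - 1) / (n : ℂ) ^ α‖ := by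
  obtain ⟨c, hc, hlarge⟩ := exists_mul_norm_le_norm_floor_of_not_isLittleO
    (g := fun x : ℝ => x ^ (-α.re))
    (not_isLittleO_sum_div_natCast_cpow not_tendsto_neg_one_pow_pred_zero α)
  refine ⟨c, hc, fun x₀ => ?_⟩
  obtain ⟨x, hx, hle⟩ := hlarge x₀
  exact ⟨x, hx, (mul_le_mul_of_nonneg_left (Real.le_norm_self _) hc.le).trans hle⟩

theorem stmt14 (α : ℂ) (hα : 0 < α.re) (hζ : riemannZeta α = 0) :
    ∃ c : ℝ, 0 < c ∧ ∀ x₀ : ℝ, ∃ x : ℝ, x₀ ≤ x ∧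
      c * x ^ (-α.re) ≤ ‖∑ n ∈ Finset.Icc 1 ⌊x⌋₊, (-1 : ℂ) ^ (n - 1) / (n : ℂ) ^ α‖ :=
  stmt14_general α
end

section
/- For an integer k > 1, define g_k : ℕ → ℂ by g_k(n) = 1 − k if k divides n and g_k(n) = 1 otherwise. Then g_k is a multiplicative function if and only if k is a prime power. -/
open Filter Finset

/-- For `k > 1`, `gk k n = 1 - k` if `k ∣ n` and `1` otherwise. -/
noncomputable def gk (k : ℕ) (n : ℕ) : ℂ := if k ∣ n then 1 - (k : ℂ) else 1

/-!
The function with value `c ≠ 1` on the multiples of `k` and `1` elsewhere is multiplicative exactly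
when `k ≠ 1` and `k` divides a product of coprime numbers only by dividing one of them. For `k ≠ 0`
that property characterises prime powers: if `p` is a prime factor of `k`, apply it to the coprime
factors `p ^ e` and `k / p ^ e`, where `p ^ e` is the exact power of `p` in `k`. As `p` does not
divide `k / p ^ e`, neither does `k`, so `k` divides `p ^ e`.
-/

theorem isPrimePow_iff_dvd_or_dvd_of_coprime {k : ℕ} (hk : k ≠ 0) :
    IsPrimePow k ↔ k ≠ 1 ∧ ∀ m n : ℕ, Nat.Coprime m n → k ∣ m * n → k ∣ m ∨ k ∣ n := by
  refine ⟨fun h => ⟨h.ne_one, fun m n hmn => (hmn.isPrimePow_dvd_mul h).mp⟩, ?_⟩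
  rintro ⟨hk1, hdvd⟩
  obtain ⟨p, hp, hpk⟩ := Nat.exists_prime_and_dvd hk1
  have hcop : Nat.Coprime (p ^ k.factorization p) (k / p ^ k.factorization p) :=
    (Nat.coprime_ordCompl hp hk).pow_left _
  rcases hdvd _ _ hcop (Nat.ordProj_mul_ordCompl_eq_self k p).symm.dvd with h | h
  · have he : k.factorization p ≠ 0 := (hp.factorization_pos_of_dvd hk hpk).ne'
    exact (hp.isPrimePow.pow he).dvd h hk1
  · exact absurd (hpk.trans h) (Nat.not_dvd_ordCompl hp hk)

theorem isMultFn_ite_dvd_iff (k : ℕ) {c : ℂ} (hc : c ≠ 1) :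
    IsMultFn (fun n => if k ∣ n then c else 1) ↔
      k ≠ 1 ∧ ∀ m n : ℕ, Nat.Coprime m n → k ∣ m * n → k ∣ m ∨ k ∣ n := by
  constructor
  · rintro ⟨hone, hmul⟩
    refine ⟨fun hk1 => hc (by simpa [hk1] using hone), fun m n hmn hdvd => ?_⟩
    by_contra! ⟨hm, hn⟩
    exact hc (by simpa [hdvd, hm, hn] using hmul m n hmn)
  · rintro ⟨hk1, hdvd⟩
    refine ⟨by simp [hk1], fun m n hmn => ?_⟩
    have hiff : k ∣ m * n ↔ k ∣ m ∨ k ∣ n :=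
      ⟨hdvd m n hmn, fun h => h.elim (·.mul_right n) (·.mul_left m)⟩
    have hnot : ¬(k ∣ m ∧ k ∣ n) := fun h => hk1 (Nat.eq_one_of_dvd_coprimes hmn h.1 h.2)
    by_cases hm : k ∣ m <;> by_cases hn : k ∣ n <;> simp_all

theorem stmt15_general {k : ℕ} (hk : k ≠ 0) {c : ℂ} (hc : c ≠ 1) :
    IsMultFn (fun n => if k ∣ n then c else 1) ↔ IsPrimePow k :=
  (isMultFn_ite_dvd_iff k hc).trans (isPrimePow_iff_dvd_or_dvd_of_coprime hk).symm

theorem stmt15 (k : ℕ) (hk : 1 < k) : IsMultFn (gk k) ↔ IsPrimePow k := by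
  have hk0 : k ≠ 0 := Nat.ne_zero_of_lt hk
  exact stmt15_general hk0 (by simpa using hk0)
end

section
/- Let k > 1 be an integer and let α be a complex number with Re α > 0 and α ≠ 1. Then the series ∑_{n=1}^∞ g_k(n)/n^α converges and its sum equals (1 − k^{1−α}) ζ(α), where ζ is the Riemann zeta function. -/
open Filter Finset

/-!
The partial sums of `gk k` are `N % k`, hence bounded. Summation by parts therefore makes its
Dirichlet series converge for `0 < re s`, to `s ∫₁^∞ A(t) t^{-s-1} dt` with `A` the summatory
function; up to the factor `s` this is a Mellin transform, so the sum is holomorphic there. For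
`1 < re s` the series converges absolutely, and splitting off the multiples of `k` evaluates it as
`(1 - k^{1-s}) ζ(s)`. The first factor vanishes at `s = 1` and cancels the pole of `ζ`, so the
identity theorem carries this value over to the whole half-plane.
-/

open Asymptotics MeasureTheory Topology

lemma seriesTendsTo_succ_iff {g : ℕ → ℂ} (hg : g 0 = 0) {L : ℂ} :
    SeriesTendsTo (fun n ↦ g (n + 1)) L ↔ SeriesTendsTo g L := by
  unfold SeriesTendsTo
  rw [← tendsto_add_atTop_iff_nat (f := fun N ↦ ∑ n ∈ range N, g n) 1]
  simp only [sum_range_succ', hg, add_zero]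

section Summatory

variable {f : ℕ → ℂ} {r : ℝ} {s : ℂ}

/-- The summatory function `t ↦ ∑_{1 ≤ n ≤ t} f n` of an arithmetical function, on the reals. -/
noncomputable def summatory (f : ℕ → ℂ) (t : ℝ) : ℂ := ∑ n ∈ Icc 1 ⌊t⌋₊, f n

lemma summatory_of_lt_one {t : ℝ} (ht : t < 1) : summatory f t = 0 := by
  simp [summatory, Nat.floor_eq_zero.2 ht]

lemma locallyIntegrableOn_summatory (f : ℕ → ℂ) :
    LocallyIntegrableOn (summatory f) (Set.Ioi 0) := by
  have h := locallyIntegrableOn_mul_sum_Icc f (m := 1) le_rfl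
    (continuousOn_const (c := (1 : ℂ)).locallyIntegrableOn measurableSet_Ici)
  simpa only [one_mul] using! h.mono_set Set.Ioi_subset_Ici_self

/-- `s ∫_0^∞ A(t) t^{-s-1} dt` for the summatory function `A` of `f`: the value which summation by
parts assigns to the Dirichlet series of `f` at `s`. -/
noncomputable def dirichletMellin (f : ℕ → ℂ) (s : ℂ) : ℂ := s * mellin (summatory f) (-s)

lemma dirichletMellin_eq_integral_Ioi_one (f : ℕ → ℂ) (s : ℂ) :
    dirichletMellin f s = ∫ t in Set.Ioi (1 : ℝ), s * (t : ℂ) ^ (-s - 1) * summatory f t := by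
  have hvanish : ∀ t ∈ Set.Ioi (0 : ℝ) \ Set.Ici 1, (t : ℂ) ^ (-s - 1) • summatory f t = 0 :=
    fun t ht ↦ by rw [summatory_of_lt_one (not_le.1 ht.2), smul_zero]
  rw [dirichletMellin, mellin, setIntegral_eq_of_subset_of_forall_sdiff_eq_zero measurableSet_Ioi
    (Set.Ici_subset_Ioi.2 one_pos) hvanish, integral_Ici_eq_integral_Ioi, ← integral_const_mul]
  simp only [smul_eq_mul, mul_assoc]

lemma differentiableOn_dirichletMellin (hf : summatory f =O[atTop] (· ^ r)) :
    DifferentiableOn ℂ (dirichletMellin f) {s | r < s.re} := by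
  intro s (hs : r < s.re)
  have hzero : summatory f =ᶠ[𝓝[>] 0] fun _ ↦ (0 : ℂ) :=
    ((eventually_lt_nhds one_pos).filter_mono nhdsWithin_le_nhds).mono
      fun _ ↦ summatory_of_lt_one
  have hmellin : DifferentiableAt ℂ (mellin (summatory f)) (-s) :=
    mellin_differentiableAt_of_isBigO_rpow (a := -r) (b := (-s).re - 1)
      (locallyIntegrableOn_summatory f) (by simpa using hf) (by simpa using hs)
      (hzero.trans_isBigO (isBigO_zero _ _)) (sub_one_lt _)
  have hcomp : DifferentiableAt ℂ (fun z ↦ mellin (summatory f) (-z)) s :=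
    hmellin.comp s differentiable_neg.differentiableAt
  exact (differentiableAt_id.mul hcomp).differentiableWithinAt

lemma isBigO_cpow_mul_summatory (hf : summatory f =O[atTop] (· ^ r)) (z : ℂ) :
    (fun t : ℝ ↦ (t : ℂ) ^ z * summatory f t) =O[atTop] fun t ↦ t ^ (z.re + r) := by
  have hcpow : (fun t : ℝ ↦ (t : ℂ) ^ z) =O[atTop] fun t ↦ t ^ z.re :=
    (Complex.norm_ofReal_cpow_eventually_eq_atTop z).isBigO.of_norm_left
  exact hcpow.mul_atTop_rpow_of_isBigO_rpow _ _ _ hf le_rfl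

lemma tendsto_cpow_mul_sum_Icc (hf : summatory f =O[atTop] (· ^ r)) (hs : r < s.re) :
    Tendsto (fun n : ℕ ↦ (n : ℂ) ^ (-s) * ∑ k ∈ Icc 1 n, f k) atTop (𝓝 0) := by
  have hpow : Tendsto (fun t : ℝ ↦ t ^ ((-s).re + r)) atTop (𝓝 0) := by
    simpa [neg_add_eq_sub] using tendsto_rpow_neg_atTop (sub_pos.2 hs)
  simpa [Function.comp_def, summatory] using
    ((isBigO_cpow_mul_summatory hf (-s)).trans_tendsto hpow).comp tendsto_natCast_atTop_atTop

lemma isBigO_deriv_cpow_mul_summatory (hf : summatory f =O[atTop] (· ^ r)) (hs : s ≠ 0) :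
    (fun t : ℝ ↦ deriv (fun x : ℝ ↦ (x : ℂ) ^ (-s)) t * summatory f t) =O[atTop]
      fun t ↦ t ^ ((-s - 1).re + r) := by
  refine ((isBigO_cpow_mul_summatory hf (-s - 1)).const_mul_left (-s)).congr' ?_ .rfl
  filter_upwards [eventually_ne_atTop 0] with t ht
  rw [Complex.deriv_ofReal_cpow_const ht (neg_ne_zero.2 hs), mul_assoc]

lemma neg_integral_deriv_cpow_mul_summatory (f : ℕ → ℂ) (hs : s ≠ 0) :
    -∫ t in Set.Ioi (1 : ℝ), deriv (fun x : ℝ ↦ (x : ℂ) ^ (-s)) t * summatory f t =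
      dirichletMellin f s := by
  rw [dirichletMellin_eq_integral_Ioi_one, ← integral_neg]
  refine setIntegral_congr_fun measurableSet_Ioi fun t ht ↦ ?_
  simp only [Complex.deriv_ofReal_cpow_const (one_pos.trans ht).ne' (neg_ne_zero.2 hs), neg_mul,
    neg_neg]

lemma sum_Icc_zero_update (f : ℕ → ℂ) (n : ℕ) :
    ∑ k ∈ Icc 0 n, Function.update f 0 0 k = ∑ k ∈ Icc 1 n, f k := by
  rw [← Nat.range_succ_eq_Icc_zero, sum_range_eq_add_Ico _ n.succ_pos, Function.update_self,
    zero_add]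
  exact sum_congr rfl fun k hk ↦ Function.update_of_ne (by grind) _ _

lemma term_eq_cpow_neg_mul_update (f : ℕ → ℂ) (s : ℂ) (n : ℕ) :
    LSeries.term f s n = (n : ℂ) ^ (-s) * Function.update f 0 0 n := by
  rcases eq_or_ne n 0 with rfl | hn
  · simp
  · rw [LSeries.term_of_ne_zero hn, Function.update_of_ne hn, Complex.cpow_neg, div_eq_inv_mul]

theorem seriesTendsTo_dirichletMellin (hr : 0 ≤ r) (hf : summatory f =O[atTop] (· ^ r))
    (hs : r < s.re) :
    SeriesTendsTo (LSeries.term f s) (dirichletMellin f s) := by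
  have hre : 0 < s.re := hr.trans_lt hs
  have hs0 : s ≠ 0 := Complex.ne_zero_of_re_pos hre
  have hexp : (-s - 1).re + r < -1 := by
    rw [Complex.sub_re, Complex.neg_re, Complex.one_re]
    linarith
  have hdiff (t : ℝ) (ht : t ∈ Set.Ici 1) : DifferentiableAt ℝ (fun x : ℝ ↦ (x : ℂ) ^ (-s)) t :=
    differentiableAt_id.ofReal_cpow_const (one_pos.trans_le ht).ne' (neg_ne_zero.2 hs0)
  have hderiv : IntegrableOn (deriv fun x : ℝ ↦ (x : ℂ) ^ (-s)) (Set.Ici 1) :=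
    (integrableOn_Ici_iff_integrableOn_Ioi (by simp)).2
      (integrableOn_Ioi_deriv_ofReal_cpow one_pos (by simpa using hre))
  -- `LSeries.term` ignores `f 0`, whereas Abel summation over `Icc 0 n` needs it to vanish.
  have habel := tendsto_sum_mul_atTop_nhds_one_sub_integral₀ (c := Function.update f 0 0)
    (f := fun x : ℝ ↦ (x : ℂ) ^ (-s)) (l := 0) (g := fun t ↦ t ^ ((-s - 1).re + r))
    (Function.update_self _ _ _) hdiff hderiv.locallyIntegrableOn
    (by simpa only [sum_Icc_zero_update] using! tendsto_cpow_mul_sum_Icc hf hs)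
    (by simpa only [sum_Icc_zero_update] using! isBigO_deriv_cpow_mul_summatory hf hs0)
    (integrableAtFilter_rpow_atTop_iff.2 hexp)
  refine (tendsto_add_atTop_iff_nat 1).1 ?_
  simp only [sum_Icc_zero_update, zero_sub] at habel
  simpa only [term_eq_cpow_neg_mul_update, Nat.range_succ_eq_Icc_zero,
    ← neg_integral_deriv_cpow_mul_summatory f hs0] using! habel

theorem seriesTendsTo_of_lseriesHasSum {F : ℂ → ℂ} {σ : ℝ} (hr : 0 ≤ r)
    (hf : summatory f =O[atTop] (· ^ r)) (hF : DifferentiableOn ℂ F {s | r < s.re})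
    (hsum : ∀ s : ℂ, σ < s.re → LSeriesHasSum f s (F s)) (hs : r < s.re) :
    SeriesTendsTo (LSeries.term f s) (F s) := by
  have hopen (x : ℝ) : IsOpen {z : ℂ | x < z.re} := isOpen_lt continuous_const Complex.continuous_re
  have hz₀ (x : ℝ) (hx : x ≤ max r σ) : ((max r σ + 1 : ℝ) : ℂ) ∈ {z : ℂ | x < z.re} := by
    simpa using hx.trans_lt (lt_add_one _)
  have heq : Set.EqOn (dirichletMellin f) F {s | r < s.re} := by
    refine AnalyticOnNhd.eqOn_of_preconnected_of_eventuallyEq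
      ((differentiableOn_dirichletMellin hf).analyticOnNhd (hopen r))
      (hF.analyticOnNhd (hopen r)) (convex_halfSpace_re_gt r).isPreconnected
      (hz₀ r (le_max_left _ _)) ?_
    filter_upwards [(hopen r).mem_nhds (hz₀ r (le_max_left _ _)),
      (hopen σ).mem_nhds (hz₀ σ (le_max_right _ _))] with z hrz hσz
    exact tendsto_nhds_unique (seriesTendsTo_dirichletMellin hr hf hrz)
      (hsum z hσz).tendsto_sum_nat
  exact heq hs ▸ seriesTendsTo_dirichletMellin hr hf hs

end Summatory

lemma lseriesHasSum_comp_div_of_dvd {f : ℕ → ℂ} {s a : ℂ} {k : ℕ} (hk : k ≠ 0)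
    (hf : LSeriesHasSum f s a) :
    LSeriesHasSum (fun n ↦ if k ∣ n then f (n / k) else 0) s ((k : ℂ) ^ (-s) * a) := by
  have hinj : Function.Injective (k * ·) := mul_right_injective₀ hk
  refine (hinj.hasSum_iff fun n hn ↦ ?_).1 ?_
  · have hdvd : ¬ k ∣ n := fun ⟨m, hm⟩ ↦ hn ⟨m, hm.symm⟩
    simp [LSeries.term_def, hdvd]
  · convert! hf.mul_left ((k : ℂ) ^ (-s)) using 1
    funext n
    rcases eq_or_ne n 0 with rfl | hn
    · simp
    · simp only [Function.comp_apply, LSeries.term_of_ne_zero (mul_ne_zero hk hn),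
        LSeries.term_of_ne_zero hn, dvd_mul_right, if_true,
        Nat.mul_div_cancel_left n (Nat.pos_of_ne_zero hk), Nat.cast_mul,
        Complex.natCast_mul_natCast_cpow, Complex.cpow_neg]
      ring

section gk

variable {k : ℕ}

lemma gk_eq_one_sub_ite (k n : ℕ) : gk k n = 1 - if k ∣ n then (k : ℂ) else 0 := by
  unfold gk
  split_ifs <;> simp

lemma sum_Icc_gk (k N : ℕ) : ∑ n ∈ Icc 1 N, gk k n = (N % k : ℕ) := by
  have hcard : #{n ∈ Icc 1 N | k ∣ n} = N / k := Nat.Ioc_filter_dvd_card_eq_div N k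
  have hdiv : (k : ℂ) * (N / k : ℕ) + (N % k : ℕ) = N := mod_cast Nat.div_add_mod N k
  simp only [gk_eq_one_sub_ite, sum_sub_distrib, ← sum_filter, sum_const, hcard, Nat.card_Icc,
    nsmul_eq_mul]
  push_cast
  linear_combination -hdiv

lemma isBigO_summatory_gk (hk : k ≠ 0) :
    summatory (gk k) =O[atTop] fun t : ℝ ↦ t ^ (0 : ℝ) := by
  refine .of_bound k (.of_forall fun t ↦ ?_)
  rw [summatory, sum_Icc_gk, Complex.norm_natCast, Real.rpow_zero, norm_one, mul_one]
  exact_mod_cast (Nat.mod_lt ⌊t⌋₊ (Nat.pos_of_ne_zero hk)).le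

lemma lseriesHasSum_gk (hk : k ≠ 0) {s : ℂ} (hs : 1 < s.re) :
    LSeriesHasSum (gk k) s ((1 - (k : ℂ) ^ (1 - s)) * riemannZeta s) := by
  have hζ := LSeriesHasSum_one hs
  have hgk : gk k = 1 - (k : ℂ) • fun n ↦ if k ∣ n then 1 else 0 := by
    funext n
    simp [gk_eq_one_sub_ite]
  have hvalue : (1 - (k : ℂ) ^ (1 - s)) * riemannZeta s =
      riemannZeta s - (k : ℂ) • ((k : ℂ) ^ (-s) * riemannZeta s) := by
    rw [sub_eq_add_neg 1 s, Complex.cpow_add _ _ (Nat.cast_ne_zero.2 hk), Complex.cpow_one,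
      smul_eq_mul]
    ring
  rw [hgk, hvalue]
  exact hζ.sub ((lseriesHasSum_comp_div_of_dvd hk hζ).smul k)

/-- The entire function continuing `(1 - k^{1-s}) ζ(s)`, the zero of the first factor at `s = 1`
being divided out against the pole of `ζ`. -/
noncomputable def gkLFunction (k : ℕ) (s : ℂ) : ℂ :=
  dslope (fun z ↦ 1 - (k : ℂ) ^ (1 - z)) 1 s * riemannZeta₁ s

lemma gkLFunction_of_ne_one {s : ℂ} (hs : s ≠ 1) :
    gkLFunction k s = (1 - (k : ℂ) ^ (1 - s)) * riemannZeta s := by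
  rw [gkLFunction, dslope_of_ne _ hs, slope_def_field, riemannZeta_eq_inv_sub_mul hs]
  simp only [sub_self, Complex.cpow_zero, sub_zero]
  ring

lemma differentiable_gkLFunction (hk : k ≠ 0) : Differentiable ℂ (gkLFunction k) := by
  have hfactor : Differentiable ℂ fun z : ℂ ↦ 1 - (k : ℂ) ^ (1 - z) := fun z ↦
    ((differentiableAt_id.const_sub 1).const_cpow (.inl (Nat.cast_ne_zero.2 hk))).const_sub 1
  have hdslope : Differentiable ℂ (dslope (fun z : ℂ ↦ 1 - (k : ℂ) ^ (1 - z)) 1) := by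
    rw [← differentiableOn_univ] at hfactor ⊢
    exact (Complex.differentiableOn_dslope univ_mem).2 hfactor
  exact hdslope.mul differentiable_riemannZeta₁

theorem seriesTendsTo_gkLFunction (hk : k ≠ 0) {s : ℂ} (hs : 0 < s.re) :
    SeriesTendsTo (LSeries.term (gk k) s) (gkLFunction k s) := by
  refine seriesTendsTo_of_lseriesHasSum (σ := 1) le_rfl (isBigO_summatory_gk hk)
    (differentiable_gkLFunction hk).differentiableOn (fun z hz ↦ ?_) hs
  have hz1 : z ≠ 1 := by
    rintro rfl
    simp at hz
  exact gkLFunction_of_ne_one hz1 ▸ lseriesHasSum_gk hk hz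

end gk

theorem stmt16 (k : ℕ) (hk : 1 < k) (α : ℂ) (hα : 0 < α.re) (hα1 : α ≠ 1) :
    SeriesTendsTo (fun n => gk k (n + 1) / ((n : ℂ) + 1) ^ α)
      ((1 - (k : ℂ) ^ (1 - α)) * riemannZeta α) := by
  have hk0 : k ≠ 0 := Nat.ne_zero_of_lt hk
  have hterm : SeriesTendsTo (LSeries.term (gk k) α)
      ((1 - (k : ℂ) ^ (1 - α)) * riemannZeta α) :=
    gkLFunction_of_ne_one hα1 ▸ seriesTendsTo_gkLFunction hk0 hα
  simpa [LSeries.term_def] using (seriesTendsTo_succ_iff (LSeries.term_zero _ _)).2 hterm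
end
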